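/- Let K be a φ-pseudo field, A ∈ GL_n(K), and let R₁ and R₂ be two PV rings for φ(y) = A y over K, i.e., each R_i is a K-φ-algebra which is φ-simple and contains Y_i ∈ GL_n(R_i) with φ applied entrywise to Y_i equal to (the image of) A times Y_i, and R_i is generated as a K-algebra by the entries of Y_i together with (det Y_i)^{-1}. Set k := K^φ and k_i := R_i^φ (which are fields, with k_i algebraic over k). Then there exists a field k̃ which is a finite extension of k, together with k-algebra embeddings of k₁ and k₂ into k̃, and a ring isomorphism ψ : R₁ ⊗_{k₁} k̃ → R₂ ⊗_{k₂} k̃ that commutes with the endomorphisms φ ⊗ id on both sides and is compatible with the K ⊗_k k̃-algebra structures. -/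

import Mathlib

open scoped TensorProduct

/-- A `φ`-ring `R` is `φ`-simple if the zero ideal and the whole ring are its only
`φ`-ideals (ideals `I` with `φ(I) ⊆ I`). -/
def DiffSimple {R : Type*} [CommRing R] (φ : R →+* R) : Prop :=
  (⊥ : Ideal R) ≠ ⊤ ∧ ∀ I : Ideal R, (∀ x ∈ I, φ x ∈ I) → I = ⊥ ∨ I = ⊤

/-- A `φ`-pseudo field is a `φ`-simple Noetherian `φ`-ring in which every
non-zero-divisor is a unit. -/
def PseudoField (R : Type*) [CommRing R] (φ : R →+* R) : Prop :=
  DiffSimple φ ∧ IsNoetherianRing R ∧ ∀ x ∈ nonZeroDivisors R, IsUnit x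

/-- The subring of `φ`-constants of a ring with endomorphism `φ`. -/
def constSubring {R : Type*} [CommRing R] (φ : R →+* R) : Subring R :=
  RingHom.eqLocus φ (RingHom.id R)

theorem mem_constSubring {R : Type*} [CommRing R] (φ : R →+* R) (x : R) :
    x ∈ constSubring φ ↔ φ x = x := Iff.rfl

/-!
Let `S` be a `φ`-simple quotient of `R₁ ⊗[K] R₂`, and let `k'` be its field of constants. In `S` the
two fundamental matrices differ by a matrix with entries in `k'`, so `S` is generated by `k'` over
each `Rᵢ`. Constants of `S` that are linearly independent over `kᵢ` remain so over `Rᵢ`, because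
`Rᵢ` is `φ`-simple, and hence `Rᵢ ⊗[kᵢ] k' ≃ S`.

For the finiteness of `k' / k`, note that `K` is Artinian and `S` is reduced and of finite type over
`K`. By Chevalley's theorem any field contained in `S` is integral over `K`, and the integral
closure of `K` in `S` is a finite `K`-module. As elements of `k'` that are linearly independent over
`k` remain so over `K`, only finitely many of them can be independent.
-/

section CommutativeAlgebra

open Polynomial

/-- A maximal ideal `I` is an annihilator `Ann x`. Reducedness forces `x ∉ I`, so a prime below `I`
avoids `x` but contains `x * I = 0`, and hence equals `I`. -/
theorem isArtinianRing_of_isFractionRing_self (K : Type*) [CommRing K] [IsReduced K]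
    [IsNoetherianRing K] [IsFractionRing K K] : IsArtinianRing K := by
  refine isArtinianRing_iff_krullDimLE_zero.2 (Ring.KrullDimLE.mk₀ fun p hp => ?_)
  obtain ⟨I, hI, hpI⟩ := p.exists_le_maximal hp.ne_top
  obtain ⟨-, x, hx⟩ :=
    isAssociatedPrime_iff.1 (Ideal.IsMaximal.mem_associatedPrimes_of_isFractionRing K I)
  have mem_iff (y : K) : y ∈ I ↔ y * x = 0 := by
    rw [hx, Submodule.mem_colon_singleton, Submodule.mem_bot, smul_eq_mul]
  have hxI : x ∉ I := fun h => by
    have hx0 : x = 0 := IsReduced.eq_zero x ⟨2, by rw [sq, (mem_iff x).1 h]⟩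
    exact hI.ne_top ((Ideal.eq_top_iff_one I).2 ((mem_iff 1).2 (by rw [hx0, mul_zero])))
  have hIp : I ≤ p := fun y hy =>
    (hp.mem_or_mem ((mem_iff y).1 hy ▸ p.zero_mem)).resolve_right fun h => hxI (hpI h)
  exact le_antisymm hpI hIp ▸ hI

theorem exists_ne_zero_basicOpen_subset_range_comap (R D : Type*) [CommRing R] [IsDomain R]
    [CommRing D] [Algebra R D] [FaithfulSMul R D] [Algebra.HasGoingDown R D]
    [Algebra.FinitePresentation R D] :
    ∃ g : R, g ≠ 0 ∧
      (PrimeSpectrum.basicOpen g : Set (PrimeSpectrum R)) ⊆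
        Set.range (PrimeSpectrum.comap (algebraMap R D)) := by
  have hopen : IsOpen (Set.range (PrimeSpectrum.comap (algebraMap R D))) :=
    PrimeSpectrum.isOpenMap_comap_of_hasGoingDown_of_finitePresentation.isOpen_range
  obtain ⟨P, hP, hP0⟩ := Ideal.exists_comap_eq_of_mem_minimalPrimes_of_injective
    (FaithfulSMul.algebraMap_injective R D) ⊥
    (by simp [IsDomain.minimalPrimes_eq_singleton_bot])
  obtain ⟨_, ⟨g, rfl⟩, hg0, hg⟩ :=
    PrimeSpectrum.isTopologicalBasis_basic_opens.exists_subset_of_mem_open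
      (show ⊥ ∈ Set.range (PrimeSpectrum.comap (algebraMap R D)) from
        ⟨⟨P, hP⟩, PrimeSpectrum.ext hP0⟩) hopen
  exact ⟨g, by simpa using hg0, hg⟩

theorem exists_ne_zero_forall_isUnit_of_isCoprime (R D : Type*) [CommRing R] [IsDomain R]
    [CommRing D] [Algebra R D] [FaithfulSMul R D] [Algebra.HasGoingDown R D]
    [Algebra.FinitePresentation R D] :
    ∃ g : R, g ≠ 0 ∧ ∀ p : R, IsCoprime p g → IsUnit (algebraMap R D p) → IsUnit p := by
  obtain ⟨g, hg0, hg⟩ := exists_ne_zero_basicOpen_subset_range_comap R D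
  refine ⟨g, hg0, fun p hpg hu => by_contra fun hp => ?_⟩
  obtain ⟨M, hM, hpM⟩ := exists_max_ideal_of_mem_nonunits hp
  have hgM : g ∉ M := fun h => by
    obtain ⟨a, b, hab⟩ := hpg
    exact M.ne_top_iff_one.1 hM.ne_top
      (hab ▸ M.add_mem (M.mul_mem_left a hpM) (M.mul_mem_left b h))
  obtain ⟨Q, hQ⟩ := hg (show (⟨M, hM.isPrime⟩ : PrimeSpectrum R) ∈ _ from hgM)
  have hpQ : p ∈ (PrimeSpectrum.comap (algebraMap R D) Q).asIdeal := hQ ▸ hpM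
  exact Q.isPrime.ne_top (Q.asIdeal.eq_top_of_isUnit_mem hpQ hu)

/-- With `m ∈ k[X]` monic and vanishing at the roots of `g` that are integral over `k`, take
`X * m + 1`. -/
theorem exists_monic_natDegree_ne_zero_isCoprime_map (k : Type*) {F : Type*} [CommRing k] [Field F]
    [Algebra k F] {g : F[X]} (hg : g ≠ 0) :
    ∃ p : k[X], p.Monic ∧ p.natDegree ≠ 0 ∧ IsCoprime (p.map (algebraMap k F)) g := by
  classical
  have : Nontrivial k := (algebraMap k F).domain_nontrivial
  let E := AlgebraicClosure F
  let Z : Finset E := {z ∈ (g.aroots E).toFinset | IsIntegral k z}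
  let m : k[X] := ∏ z ∈ Z, minpoly k z
  have hm : m.Monic :=
    monic_prod_of_monic _ _ fun z hz => minpoly.monic (Finset.mem_filter.1 hz).2
  have hdeg : (X * m).natDegree = m.natDegree + 1 := natDegree_X_mul hm.ne_zero
  have hmonic : (X * m + C 1).Monic :=
    (monic_X.mul hm).add_of_left (degree_lt_degree (by simp [hdeg]))
  refine ⟨X * m + C 1, hmonic, by rw [natDegree_add_C, hdeg]; exact Nat.succ_ne_zero _,
    (isCoprime_iff_aeval_ne_zero_of_isAlgClosed F E _ _).2 fun z => ?_⟩
  by_contra! h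
  obtain ⟨hpz, hgz⟩ := h
  rw [aeval_map_algebraMap] at hpz
  have hzZ : z ∈ Z := Finset.mem_filter.2 ⟨by simp [hg, hgz], _, hmonic, hpz⟩
  have hmz : aeval z m = 0 := by
    rw [map_prod]
    exact Finset.prod_eq_zero hzZ (minpoly.aeval k z)
  simp [hmz] at hpz

/-- If the image `x` of `a` were transcendental, all but finitely many points of `Spec F[X]` would
be in the image of `Spec D`. But `p(x)` is a unit for every `p ∈ ℤ[X]` with `p(a) ≠ 0`. -/
theorem isAlgebraic_algebraMap_of_finiteType (F : Type*) {l D : Type*} [Field F] [Field l]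
    [CommRing D] [IsDomain D] [Algebra F D] [Algebra.FiniteType F D] [Algebra l D] (a : l) :
    IsAlgebraic F (algebraMap l D a) := by
  by_contra hx
  set x := algebraMap l D a with hx_def
  let _ : Algebra F[X] D := (aeval x : F[X] →ₐ[F] D).toAlgebra
  have : IsScalarTower F F[X] D := IsScalarTower.of_algebraMap_eq' (by
    ext r
    simp [RingHom.algebraMap_toAlgebra])
  have : FaithfulSMul F[X] D :=
    (faithfulSMul_iff_algebraMap_injective _ _).2 (transcendental_iff_injective.1 hx)
  have : Algebra.FiniteType F[X] D := Algebra.FiniteType.of_restrictScalars_finiteType F _ _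
  have : Algebra.FinitePresentation F[X] D := Algebra.FinitePresentation.of_finiteType.1 ‹_›
  obtain ⟨g, hg0, hg⟩ := exists_ne_zero_forall_isUnit_of_isCoprime F[X] D
  obtain ⟨p, hp, hdeg, hpg⟩ := exists_monic_natDegree_ne_zero_isCoprime_map ℤ hg0
  have hval : algebraMap F[X] D (p.map (algebraMap ℤ F)) = algebraMap l D (aeval a p) := by
    rw [← aeval_algebraMap_apply, ← hx_def]
    exact aeval_map_algebraMap F x p
  have hpa : aeval a p ≠ 0 := fun h => hx ⟨p.map (algebraMap ℤ F), (hp.map _).ne_zero, by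
    rw [aeval_map_algebraMap, hx_def, aeval_algebraMap_apply, h, map_zero]⟩
  have hu := hg _ hpg (hval ▸ hpa.isUnit.map (algebraMap l D))
  exact hdeg (by rw [← hp.natDegree_map (algebraMap ℤ F), natDegree_eq_zero_of_isUnit hu])

theorem exists_finite_field_isScalarTower (K : Type u) (D : Type*) [CommRing K] [IsArtinianRing K]
    [CommRing D] [IsDomain D] [Algebra K D] :
    ∃ (F : Type u) (_ : Field F) (_ : Algebra K F) (_ : Algebra F D),
      Module.Finite K F ∧ IsScalarTower K F D := by
  let p := RingHom.ker (algebraMap K D)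
  have : p.IsPrime := RingHom.ker_isPrime _
  let _ : Algebra (K ⧸ p) D := (RingHom.kerLift (algebraMap K D)).toAlgebra
  exact ⟨K ⧸ p, Ideal.Quotient.field p, inferInstance, inferInstance, inferInstance,
    IsScalarTower.of_algebraMap_eq fun _ => rfl⟩

theorem isIntegral_algebraMap_of_isDomain (K : Type*) {l D : Type*} [CommRing K]
    [IsArtinianRing K] [Field l] [CommRing D] [IsDomain D] [Algebra K D] [Algebra.FiniteType K D]
    [Algebra l D] (a : l) : IsIntegral K (algebraMap l D a) := by
  obtain ⟨F, _, _, _, _, _⟩ := exists_finite_field_isScalarTower K D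
  have : Algebra.FiniteType F D := Algebra.FiniteType.of_restrictScalars_finiteType K _ _
  exact isIntegral_trans _ (isAlgebraic_algebraMap_of_finiteType F a).isIntegral

theorem isIntegral_of_forall_minimalPrimes {K S : Type*} [CommRing K] [CommRing S]
    [Finite (minimalPrimes S)] [Algebra K S] {x : S}
    (hx : ∀ P ∈ minimalPrimes S, IsIntegral K (Ideal.Quotient.mk P x)) : IsIntegral K x := by
  have := Fintype.ofFinite (minimalPrimes S)
  choose p hp hpx using fun P : minimalPrimes S => hx P P.2
  have hnil : IsNilpotent (aeval x (∏ P, p P)) := by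
    rw [← mem_nilradical, nilradical, ← Ideal.sInf_minimalPrimes, Ideal.mem_sInf]
    intro P hP
    rw [map_prod]
    refine Ideal.mem_of_dvd _ (Finset.dvd_prod_of_mem _ (Finset.mem_univ ⟨P, hP⟩))
      (Ideal.Quotient.eq_zero_iff_mem.1 ?_)
    rw [← Ideal.Quotient.mkₐ_eq_mk K, ← aeval_algHom_apply]
    exact hpx ⟨P, hP⟩
  obtain ⟨n, hn⟩ := hnil
  exact ⟨(∏ P, p P) ^ n, (monic_prod_of_monic _ _ fun P _ => hp P).pow n, by
    rw [← aeval_def, map_pow, hn]⟩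

theorem isIntegral_algebraMap_of_finiteType (K : Type*) {l S : Type*} [CommRing K]
    [IsArtinianRing K] [Field l] [CommRing S] [Algebra K S] [Algebra.FiniteType K S]
    [Algebra l S] (a : l) : IsIntegral K (algebraMap l S a) := by
  have : IsNoetherianRing S := Algebra.FiniteType.isNoetherianRing K S
  have : Finite (minimalPrimes S) := minimalPrimes.finite_of_isNoetherianRing S
  refine isIntegral_of_forall_minimalPrimes fun P hP => ?_
  have : P.IsPrime := hP.1.1
  exact isIntegral_algebraMap_of_isDomain K (D := S ⧸ P) a

theorem finite_integralClosure_of_field (F D : Type*) [Field F] [CommRing D] [IsDomain D]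
    [Algebra F D] [Algebra.FiniteType F D] : Module.Finite F (integralClosure F D) := by
  let _ : Field (integralClosure F D) :=
    (isField_of_isIntegral_of_isField' (Field.toIsField F)).toField
  obtain ⟨M, hM⟩ := Ideal.exists_maximal D
  let _ : Field (D ⧸ M) := Ideal.Quotient.field M
  have : Module.Finite F (D ⧸ M) := finite_of_finite_type_of_isJacobsonRing _ _
  let f : integralClosure F D →ₐ[F] D ⧸ M :=
    (Ideal.Quotient.mkₐ F M).comp (integralClosure F D).val
  exact Module.Finite.of_injective f.toLinearMap f.toRingHom.injective

theorem finite_integralClosure_of_isDomain (K D : Type*) [CommRing K] [IsArtinianRing K]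
    [CommRing D] [IsDomain D] [Algebra K D] [Algebra.FiniteType K D] :
    Module.Finite K (integralClosure K D) := by
  obtain ⟨F, _, _, _, _, _⟩ := exists_finite_field_isScalarTower K D
  have : Algebra.FiniteType F D := Algebra.FiniteType.of_restrictScalars_finiteType K _ _
  have := finite_integralClosure_of_field F D
  have : Module.Finite K (integralClosure F D) := Module.Finite.trans F _
  let f : integralClosure K D →ₗ[K] integralClosure F D :=
    { toFun x := ⟨x, x.2.tower_top⟩
      map_add' _ _ := rfl
      map_smul' _ _ := rfl }
  exact Module.Finite.of_injective f fun _ _ h =>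
    Subtype.ext (congrArg ((↑) : integralClosure F D → D) h)

theorem finite_integralClosure_of_isReduced (K S : Type*) [CommRing K] [IsArtinianRing K]
    [CommRing S] [IsReduced S] [Algebra K S] [Algebra.FiniteType K S] :
    Module.Finite K (integralClosure K S) := by
  have : IsNoetherianRing S := Algebra.FiniteType.isNoetherianRing K S
  have : Finite (minimalPrimes S) := minimalPrimes.finite_of_isNoetherianRing S
  have (P : minimalPrimes S) : P.1.IsPrime := P.2.1.1
  have (P : minimalPrimes S) := finite_integralClosure_of_isDomain K (S ⧸ P.1)
  let f : integralClosure K S →ₗ[K] ∀ P : minimalPrimes S, integralClosure K (S ⧸ P.1) :=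
    LinearMap.pi fun P =>
      ((Ideal.Quotient.mkₐ K P.1).mapIntegralClosure).toLinearMap
  refine Module.Finite.of_injective f ((injective_iff_map_eq_zero f).2 fun x hx => ?_)
  refine Subtype.ext (IsReduced.eq_zero (x : S) ?_)
  rw [← mem_nilradical, nilradical, ← Ideal.sInf_minimalPrimes, Ideal.mem_sInf]
  exact fun P hP =>
    Ideal.Quotient.eq_zero_iff_mem.1 (congrArg Subtype.val (congrFun hx ⟨P, hP⟩))

end CommutativeAlgebra

section DiffSimple

open Function (Semiconj)

variable {R S : Type*} [CommRing R] [CommRing S] {φ : R →+* R} {σ : S →+* S}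

theorem DiffSimple.nontrivial (hφ : DiffSimple φ) : Nontrivial R :=
  (Submodule.nontrivial_iff R).1 ⟨⊥, ⊤, hφ.1⟩

theorem DiffSimple.isReduced (hφ : DiffSimple φ) : IsReduced R := by
  have := hφ.nontrivial
  rw [← nilradical_eq_bot_iff]
  exact (hφ.2 (nilradical R) fun x hx => IsNilpotent.map hx φ).resolve_right fun ht =>
    not_isNilpotent_one (mem_nilradical.1 (ht ▸ Submodule.mem_top : (1 : R) ∈ nilradical R))

theorem DiffSimple.injective [Nontrivial S] (hφ : DiffSimple φ) {f : R →+* S}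
    (hf : Semiconj f φ σ) : Function.Injective f := by
  refine (RingHom.injective_iff_ker_eq_bot f).2
    ((hφ.2 _ fun x hx => ?_).resolve_right (RingHom.ker_ne_top f))
  rw [RingHom.mem_ker] at hx ⊢
  rw [hf, hx, map_zero]

theorem PseudoField.isArtinianRing (hφ : PseudoField R φ) : IsArtinianRing R := by
  have := hφ.2.1
  have := hφ.1.isReduced
  have := IsFractionRing.self_iff_nonZeroDivisors_le_isUnit.2 hφ.2.2
  exact isArtinianRing_of_isFractionRing_self R

theorem PseudoField.isSemisimpleRing (hφ : PseudoField R φ) : IsSemisimpleRing R := by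
  have := hφ.isArtinianRing
  have := hφ.1.isReduced
  exact IsArtinianRing.isSemisimpleRing_of_isReduced R

theorem mem_constSubring_of_mul_eq_one {a b : R} (ha : a ∈ constSubring φ) (hab : a * b = 1) :
    b ∈ constSubring φ := by
  rw [mem_constSubring] at ha ⊢
  have haφ : a * φ b = 1 := by simpa [ha] using congrArg φ hab
  exact (IsUnit.of_mul_eq_one b hab).mul_left_cancel (haφ.trans hab.symm)

theorem DiffSimple.isField_constSubring (hφ : DiffSimple φ) : IsField (constSubring φ) := by
  have := hφ.nontrivial
  refine ⟨⟨0, 1, zero_ne_one⟩, mul_comm, fun {a} ha => ?_⟩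
  have hstable : ∀ x ∈ Ideal.span {(a : R)}, φ x ∈ Ideal.span {(a : R)} := by
    simp only [Ideal.mem_span_singleton]
    intro x hx
    rw [← (mem_constSubring φ a).1 a.2]
    exact map_dvd φ hx
  have htop := (hφ.2 _ hstable).resolve_left (by simpa using ha)
  obtain ⟨b, hab⟩ := (Ideal.span_singleton_eq_top.1 htop).exists_right_inv
  exact ⟨⟨b, mem_constSubring_of_mul_eq_one a.2 hab⟩, Subtype.ext hab⟩

/-- The field of constants of a `φ`-simple ring. It is not an instance, because it depends on a
proof of `φ`-simplicity. -/
noncomputable abbrev DiffSimple.constField (hφ : DiffSimple φ) : Field (constSubring φ) :=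
  hφ.isField_constSubring.toField

/-- The map `R^φ → S^σ` induced by a morphism of difference rings `(R, φ) → (S, σ)`. -/
def constMap (f : R →+* S) (hf : Semiconj f φ σ) : constSubring φ →+* constSubring σ :=
  f.restrict _ _ fun x hx => by
    rw [mem_constSubring] at hx ⊢
    rw [← hf, hx]

theorem constMap_injective [Nontrivial S] (hφ : DiffSimple φ) {f : R →+* S}
    (hf : Semiconj f φ σ) : Function.Injective (constMap f hf) := fun _ _ h =>
  Subtype.ext (hφ.injective hf (congrArg Subtype.val h))

/-- An element of `N` of minimal support can be normalized to have a coordinate equal to `1`, as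
the values of that coordinate form a `φ`-ideal. Then `mapRange φ x - x` has smaller support. -/
theorem DiffSimple.exists_ne_zero_mapRange_eq (hφ : DiffSimple φ) {ι : Type*}
    {N : Submodule R (ι →₀ R)} (hN : N ≠ ⊥)
    (hstable : ∀ x ∈ N, Finsupp.mapRange φ (map_zero φ) x ∈ N) :
    ∃ x ∈ N, x ≠ 0 ∧ Finsupp.mapRange φ (map_zero φ) x = x := by
  have := hφ.nontrivial
  obtain ⟨x, ⟨hxN, hx0⟩, hmin⟩ := exists_minimalFor_of_wellFoundedLT
    (fun x => x ∈ N ∧ x ≠ 0) Finsupp.support ((Submodule.ne_bot_iff N).1 hN)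
  obtain ⟨j, hj⟩ := Finsupp.support_nonempty_iff.2 hx0
  let I : Ideal R := (N ⊓ Finsupp.supported R R x.support).map (Finsupp.lapply j)
  have hIφ : ∀ r ∈ I, φ r ∈ I := by
    rintro _ ⟨y, ⟨hyN, hyx⟩, rfl⟩
    exact ⟨_, ⟨hstable y hyN, (Finset.coe_subset.2 Finsupp.support_mapRange).trans hyx⟩,
      Finsupp.mapRange_apply (hf := map_zero φ) ..⟩
  have hI : I ≠ ⊥ := (Submodule.ne_bot_iff I).2
    ⟨x j, ⟨x, ⟨hxN, Finsupp.mem_supported_support R x⟩, rfl⟩, Finsupp.mem_support_iff.1 hj⟩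
  obtain ⟨y, ⟨hyN, hyx⟩, hyj⟩ : (1 : R) ∈ I :=
    (hφ.2 I hIφ).resolve_left hI ▸ Submodule.mem_top
  replace hyj : y j = 1 := hyj
  refine ⟨y, hyN, fun h => by simp [h] at hyj, by_contra fun hne => ?_⟩
  have hsub : (Finsupp.mapRange φ (map_zero φ) y - y).support ⊆ x.support := by
    refine fun i hi => hyx (Finsupp.mem_support_iff.2 fun hyi => ?_)
    simp [hyi] at hi
  have hjmem := hmin ⟨N.sub_mem (hstable y hyN) hyN, sub_ne_zero.2 hne⟩ hsub hj
  simp [hyj] at hjmem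

theorem DiffSimple.linearIndependent_of_semilinear (hφ : DiffSimple φ) {ι M : Type*}
    [AddCommGroup M] [Module R M] (τ : M →ₛₗ[φ] M) {v : ι → M} (hv : ∀ i, τ (v i) = v i)
    (hli : LinearIndependent (constSubring φ) v) : LinearIndependent R v := by
  refine LinearMap.ker_eq_bot.1 (by_contra fun hN => ?_)
  have hτ (x : ι →₀ R) : Finsupp.linearCombination R v (Finsupp.mapRange φ (map_zero φ) x) =
      τ (Finsupp.linearCombination R v x) := by
    simp [Finsupp.linearCombination_apply, Finsupp.sum_mapRange_index, map_finsuppSum, hv]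
  obtain ⟨x, hxN, hx0, hx⟩ := hφ.exists_ne_zero_mapRange_eq hN fun x hx => by
    rw [LinearMap.mem_ker] at hx ⊢
    rw [hτ, hx, map_zero]
  have hconst (i : ι) : φ (x i) = x i := DFunLike.congr_fun hx i
  refine hx0 (Finsupp.ext fun i => by_contra fun hi => hi ?_)
  exact congrArg Subtype.val (linearIndependent_iff'.1 hli x.support (fun i => ⟨x i, hconst i⟩)
    hxN i (Finsupp.mem_support_iff.2 hi))

theorem DiffSimple.linearIndependent_of_forall_mem_constSubring [Algebra R S] (hφ : DiffSimple φ)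
    (hσ : Semiconj (algebraMap R S) φ σ) {ι : Type*} {v : ι → S}
    (hv : ∀ i, v i ∈ constSubring σ) (hli : LinearIndependent (constSubring φ) v) :
    LinearIndependent R v :=
  hφ.linearIndependent_of_semilinear
    { σ with map_smul' r s := by simp [Algebra.smul_def, hσ.eq] } hv hli

section ConstantExtension

variable [Algebra R S] [Algebra (constSubring φ) (constSubring σ)]
  [IsScalarTower (constSubring φ) (constSubring σ) S]

theorem DiffSimple.linearIndependent_basis (hφ : DiffSimple φ)
    (hσ : Semiconj (algebraMap R S) φ σ) {ι : Type*}
    (b : Module.Basis ι (constSubring φ) (constSubring σ)) :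
    LinearIndependent R fun i => (b i : S) :=
  hφ.linearIndependent_of_forall_mem_constSubring hσ (fun i => (b i).2)
    (b.linearIndependent.map' (IsScalarTower.toAlgHom _ (constSubring σ) S).toLinearMap
      (LinearMap.ker_eq_bot.2 Subtype.val_injective))

theorem DiffSimple.finite_constSubring (hφ : DiffSimple φ) (hs : DiffSimple σ)
    (hσ : Semiconj (algebraMap R S) φ σ) [IsArtinianRing R] [Algebra.FiniteType R S] :
    Module.Finite (constSubring φ) (constSubring σ) := by
  have := hφ.nontrivial
  have := hs.isReduced
  let _ := hφ.constField
  let _ := hs.constField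
  have := finite_integralClosure_of_isReduced R S
  let b := Module.Free.chooseBasis (constSubring φ) (constSubring σ)
  have hli : LinearIndependent R fun i =>
      (⟨b i, isIntegral_algebraMap_of_finiteType R (b i)⟩ : integralClosure R S) :=
    LinearIndependent.of_comp (integralClosure R S).val.toLinearMap
      (hφ.linearIndependent_basis hσ b)
  have := hli.finite_of_isNoetherian
  exact Module.Finite.of_basis b

variable (φ σ) in
/-- The multiplication map `r ⊗ c ↦ r c` from the base change of `R` to the constants of `S`. -/
def tensorConstHom : R ⊗[constSubring φ] constSubring σ →ₐ[R] S :=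
  Algebra.TensorProduct.productLeftAlgHom (Algebra.ofId R S)
    (IsScalarTower.toAlgHom _ (constSubring σ) S)

theorem tensorConstHom_tmul (r : R) (c : constSubring σ) :
    tensorConstHom φ σ (r ⊗ₜ c) = algebraMap R S r * c := rfl

theorem DiffSimple.tensorConstHom_injective (hφ : DiffSimple φ)
    (hσ : Semiconj (algebraMap R S) φ σ) : Function.Injective (tensorConstHom φ σ) := by
  let _ := hφ.constField
  let b := Module.Free.chooseBasis (constSubring φ) (constSubring σ)
  refine LinearMap.injective_of_linearIndependent (f := (tensorConstHom φ σ).toLinearMap)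
    (Algebra.TensorProduct.basis R b).span_eq ?_
  have hb : tensorConstHom φ σ ∘ Algebra.TensorProduct.basis R b = fun i => (b i : S) :=
    funext fun i => by simp [tensorConstHom_tmul]
  exact hb ▸ hφ.linearIndependent_basis hσ b

theorem tensorConstHom_surjective (h : Algebra.adjoin R (constSubring σ : Set S) = ⊤) :
    Function.Surjective (tensorConstHom φ σ) := by
  rw [← AlgHom.range_eq_top, ← top_le_iff, ← h, Algebra.adjoin_le_iff]
  exact fun c hc => ⟨1 ⊗ₜ ⟨c, hc⟩, (tensorConstHom_tmul ..).trans (by rw [map_one, one_mul])⟩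

end ConstantExtension

/-- A ring endomorphism `φ` regarded as an endomorphism of the algebra over its constants. -/
def constAlgHom (φ : R →+* R) : R →ₐ[constSubring φ] R :=
  { φ with commutes' c := c.2 }

/-- The endomorphism `φ ⊗ id` of the base change of `R` to an algebra over its constants. -/
def baseChangeHom (φ : R →+* R) (l : Type*) [CommRing l] [Algebra (constSubring φ) l] :
    R ⊗[constSubring φ] l →+* R ⊗[constSubring φ] l :=
  (Algebra.TensorProduct.map (constAlgHom φ) (AlgHom.id (constSubring φ) l)).toRingHom

theorem baseChangeHom_tmul (l : Type*) [CommRing l] [Algebra (constSubring φ) l] (r : R) (c : l) :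
    baseChangeHom φ l (r ⊗ₜ c) = φ r ⊗ₜ c := rfl

theorem tensorConstHom_baseChangeHom [Algebra R S] [Algebra (constSubring φ) (constSubring σ)]
    [IsScalarTower (constSubring φ) (constSubring σ) S] (hσ : Semiconj (algebraMap R S) φ σ)
    (t : R ⊗[constSubring φ] constSubring σ) :
    tensorConstHom φ σ (baseChangeHom φ _ t) = σ (tensorConstHom φ σ t) := by
  induction t with
  | zero => simp only [map_zero]
  | add t u ht hu => simp only [map_add, ht, hu]
  | tmul r c =>
    rw [baseChangeHom_tmul, tensorConstHom_tmul, tensorConstHom_tmul, map_mul, hσ, c.2]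
    rfl

end DiffSimple

section Isomorphism

open Function (Semiconj)

variable {K R₁ R₂ S : Type*} [CommRing K] [CommRing R₁] [CommRing R₂] [CommRing S] [Algebra K R₁]
  [Algebra K R₂] [Algebra K S] [Algebra R₁ S] [Algebra R₂ S] [IsScalarTower K R₁ S]
  [IsScalarTower K R₂ S] {φ₁ : R₁ →+* R₁} {φ₂ : R₂ →+* R₂} {σ : S →+* S}
  [Algebra (constSubring φ₁) (constSubring σ)] [Algebra (constSubring φ₂) (constSubring σ)]
  [IsScalarTower (constSubring φ₁) (constSubring σ) S]
  [IsScalarTower (constSubring φ₂) (constSubring σ) S]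

variable (K) in
theorem exists_ringEquiv_baseChange (hφ₁ : DiffSimple φ₁) (hφ₂ : DiffSimple φ₂)
    (hσ₁ : Semiconj (algebraMap R₁ S) φ₁ σ) (hσ₂ : Semiconj (algebraMap R₂ S) φ₂ σ)
    (h₁ : Algebra.adjoin R₁ (constSubring σ : Set S) = ⊤)
    (h₂ : Algebra.adjoin R₂ (constSubring σ : Set S) = ⊤) :
    ∃ ψ : R₁ ⊗[constSubring φ₁] constSubring σ ≃+* R₂ ⊗[constSubring φ₂] constSubring σ,
      Semiconj ψ (baseChangeHom φ₁ _) (baseChangeHom φ₂ _) ∧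
      ∀ (x : K) (c : constSubring σ), ψ (algebraMap K R₁ x ⊗ₜ c) = algebraMap K R₂ x ⊗ₜ c := by
  let E₁ := RingEquiv.ofBijective (tensorConstHom φ₁ σ)
    ⟨hφ₁.tensorConstHom_injective hσ₁, tensorConstHom_surjective h₁⟩
  let E₂ := RingEquiv.ofBijective (tensorConstHom φ₂ σ)
    ⟨hφ₂.tensorConstHom_injective hσ₂, tensorConstHom_surjective h₂⟩
  have hψ (t) : tensorConstHom φ₂ σ ((E₁.trans E₂.symm) t) = tensorConstHom φ₁ σ t :=
    E₂.apply_symm_apply (E₁ t)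
  refine ⟨E₁.trans E₂.symm, fun t => E₂.injective ?_, fun x c => E₂.injective ?_⟩
  · refine (hψ _).trans (Eq.trans ?_ (tensorConstHom_baseChangeHom hσ₂ _).symm)
    rw [tensorConstHom_baseChangeHom hσ₁, hψ]
  · refine (hψ _).trans (Eq.trans ?_ (tensorConstHom_tmul ..).symm)
    rw [tensorConstHom_tmul, ← IsScalarTower.algebraMap_apply, ← IsScalarTower.algebraMap_apply]

end Isomorphism

section FundamentalMatrix

open Function (Semiconj)

variable {ι R S : Type*} [Fintype ι] [DecidableEq ι] [CommRing R] [CommRing S] {φ : R →+* R}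
  {σ : S →+* S}

/-- `Y` is a fundamental solution matrix of the difference equation `σ(y) = A y`. -/
structure IsFundamentalMatrix (σ : S →+* S) (A Y : Matrix ι ι S) : Prop where
  isUnit_det : IsUnit Y.det
  map_eq : Y.map σ = A * Y

namespace IsFundamentalMatrix

theorem map {A Y : Matrix ι ι R} (hY : IsFundamentalMatrix φ A Y) {f : R →+* S}
    (hf : Semiconj f φ σ) : IsFundamentalMatrix σ (A.map f) (Y.map f) where
  isUnit_det := f.map_det Y ▸ hY.isUnit_det.map f
  map_eq := by
    rw [← Matrix.map_mul, ← hY.map_eq, Matrix.map_map, Matrix.map_map, hf.comp_eq]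

variable {A Y Y' : Matrix ι ι S}

theorem map_inv_mul (hY : IsFundamentalMatrix σ A Y) (hY' : IsFundamentalMatrix σ A Y') :
    (Y⁻¹ * Y').map σ = Y⁻¹ * Y' := by
  have hAY : IsUnit (A * Y) := by
    rw [← hY.map_eq, Matrix.isUnit_iff_isUnit_det]
    exact σ.map_det Y ▸ hY.isUnit_det.map σ
  refine hAY.mul_left_cancel ?_
  calc A * Y * (Y⁻¹ * Y').map σ
    _ = (Y * (Y⁻¹ * Y')).map σ := by rw [← hY.map_eq, ← Matrix.map_mul]
    _ = A * Y' := by rw [Matrix.mul_nonsing_inv_cancel_left _ _ hY.isUnit_det, hY'.map_eq]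
    _ = A * Y * (Y⁻¹ * Y') := by
      rw [mul_assoc, Matrix.mul_nonsing_inv_cancel_left _ _ hY.isUnit_det]

theorem inv_mul_apply_mem (hY : IsFundamentalMatrix σ A Y) (hY' : IsFundamentalMatrix σ A Y')
    (i j : ι) : (Y⁻¹ * Y') i j ∈ constSubring σ :=
  congrFun (congrFun (hY.map_inv_mul hY') i) j

theorem det_mul_mem (hY : IsFundamentalMatrix σ A Y) (hY' : IsFundamentalMatrix σ A Y') {w' : S}
    (hw' : Y'.det * w' = 1) : Y.det * w' ∈ constSubring σ := by
  have hdet : (Y⁻¹ * Y').det ∈ constSubring σ :=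
    (σ.map_det _).trans (congrArg Matrix.det (hY.map_inv_mul hY'))
  refine mem_constSubring_of_mul_eq_one hdet ?_
  rw [← mul_assoc, mul_comm _ Y.det, ← Matrix.det_mul,
    Matrix.mul_nonsing_inv_cancel_left _ _ hY.isUnit_det, hw']

theorem apply_mem (hY : IsFundamentalMatrix σ A Y) (hY' : IsFundamentalMatrix σ A Y')
    {T : Subring S} (hT : constSubring σ ≤ T) (hYT : ∀ i j, Y i j ∈ T) (i j : ι) :
    Y' i j ∈ T := by
  rw [← Matrix.mul_nonsing_inv_cancel_left Y Y' hY.isUnit_det, Matrix.mul_apply]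
  exact T.sum_mem fun m _ => T.mul_mem (hYT i m) (hT (hY.inv_mul_apply_mem hY' m j))

theorem inv_det_mem (hY : IsFundamentalMatrix σ A Y) (hY' : IsFundamentalMatrix σ A Y')
    {T : Subring S} (hT : constSubring σ ≤ T) {w w' : S} (hw : Y.det * w = 1) (hwT : w ∈ T)
    (hw' : Y'.det * w' = 1) : w' ∈ T := by
  rw [show w' = w * (Y.det * w') by linear_combination (-w') * hw]
  exact T.mul_mem hwT (hT (hY.det_mul_mem hY' hw'))

end IsFundamentalMatrix

end FundamentalMatrix

section Compositum

open Function (Semiconj)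

theorem exists_ideal_diffSimple_quotientMap {T : Type*} [CommRing T] [Nontrivial T]
    (Φ : T →+* T) :
    ∃ (I : Ideal T) (hI : I ≤ I.comap Φ), DiffSimple (Ideal.quotientMap I Φ hI) := by
  obtain ⟨I, -, ⟨hIΦ, hI1⟩, hmax⟩ := zorn_le_nonempty₀
    {I : Ideal T | I ≤ I.comap Φ ∧ (1 : T) ∉ I} (fun c hc hchain J hJ => by
      have hmem {x : T} : x ∈ sSup c ↔ ∃ I ∈ c, x ∈ I :=
        Submodule.mem_sSup_of_directed ⟨J, hJ⟩ hchain.directedOn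
      refine ⟨sSup c, ⟨fun x hx => ?_, fun h1 => ?_⟩, fun I => le_sSup⟩
      · obtain ⟨I, hI, hxI⟩ := hmem.1 hx
        exact hmem.2 ⟨I, hI, (hc hI).1 hxI⟩
      · obtain ⟨I, hI, h1I⟩ := hmem.1 h1
        exact (hc hI).2 h1I) ⊥ ⟨bot_le, by simp⟩
  have : Nontrivial (T ⧸ I) :=
    Ideal.Quotient.nontrivial_iff.2 ((Ideal.ne_top_iff_one I).2 hI1)
  refine ⟨I, hIΦ, bot_ne_top, fun J hJ => or_iff_not_imp_right.2 fun hJtop => ?_⟩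
  let π := Ideal.Quotient.mk I
  have hle : I ≤ J.comap π := fun x hx => by
    rw [Ideal.mem_comap, Ideal.Quotient.eq_zero_iff_mem.2 hx]
    exact J.zero_mem
  have hstable : J.comap π ≤ (J.comap π).comap Φ := fun x hx => hJ _ hx
  have hJI : J.comap π ≤ I := hmax ⟨hstable, fun h => hJtop ((Ideal.eq_top_iff_one J).2 h)⟩ hle
  rw [← Ideal.map_comap_of_surjective π Ideal.Quotient.mk_surjective J, eq_bot_iff]
  exact (Ideal.map_mono hJI).trans (Ideal.map_quotient_self I).le

universe v w

variable {K : Type*} {R₁ : Type v} {R₂ : Type w} [CommRing K] [CommRing R₁] [CommRing R₂]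
  [Algebra K R₁] [Algebra K R₂]

attribute [local instance] Algebra.TensorProduct.rightAlgebra in
theorem exists_diffSimple_compositum [Nontrivial (R₁ ⊗[K] R₂)] {φ : K →+* K} {φ₁ : R₁ →+* R₁}
    {φ₂ : R₂ →+* R₂} (h₁ : Semiconj (algebraMap K R₁) φ φ₁)
    (h₂ : Semiconj (algebraMap K R₂) φ φ₂) :
    ∃ (S : Type (max v w)) (_ : CommRing S) (_ : Algebra K S) (_ : Algebra R₁ S)
      (_ : Algebra R₂ S) (_ : IsScalarTower K R₁ S) (_ : IsScalarTower K R₂ S) (σ : S →+* S),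
      DiffSimple σ ∧ Semiconj (algebraMap R₁ S) φ₁ σ ∧ Semiconj (algebraMap R₂ S) φ₂ σ ∧
      (IsScalarTower.toAlgHom K R₁ S).range ⊔ (IsScalarTower.toAlgHom K R₂ S).range = ⊤ := by
  let Φ : R₁ ⊗[K] R₂ →+* R₁ ⊗[K] R₂ :=
    Algebra.TensorProduct.mapRingHom φ φ₁ φ₂ (RingHom.ext fun x => (h₁ x).symm)
      (RingHom.ext fun x => (h₂ x).symm)
  obtain ⟨I, hI, hsimple⟩ := exists_ideal_diffSimple_quotientMap Φ
  refine ⟨(R₁ ⊗[K] R₂) ⧸ I, inferInstance, inferInstance, inferInstance, inferInstance,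
    inferInstance, inferInstance, Ideal.quotientMap I Φ hI, hsimple, fun r => ?_, fun r => ?_, ?_⟩
  · have hr : Φ (r ⊗ₜ[K] 1) = φ₁ r ⊗ₜ[K] 1 := by
      rw [Algebra.TensorProduct.mapRingHom_tmul, map_one]
    exact congrArg (Ideal.Quotient.mk I) hr.symm
  · have hr : Φ (1 ⊗ₜ[K] r) = 1 ⊗ₜ[K] φ₂ r := by
      rw [Algebra.TensorProduct.mapRingHom_tmul, map_one]
    exact congrArg (Ideal.Quotient.mk I) hr.symm
  · rw [← Algebra.TensorProduct.productMap_range, AlgHom.range_eq_top]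
    intro s
    obtain ⟨t, rfl⟩ := Ideal.Quotient.mk_surjective s
    have hprod : Algebra.TensorProduct.productMap _ _ = Ideal.Quotient.mkₐ K I :=
      Algebra.TensorProduct.ext (Algebra.TensorProduct.productMap_left _ _)
        (Algebra.TensorProduct.productMap_right _ _)
    exact ⟨t, DFunLike.congr_fun hprod t⟩

theorem finiteType_of_range_sup_range_eq_top {S : Type*} [CommRing S] [Algebra K S]
    [Algebra.FiniteType K R₁] [Algebra.FiniteType K R₂] {f₁ : R₁ →ₐ[K] S} {f₂ : R₂ →ₐ[K] S}
    (h : f₁.range ⊔ f₂.range = ⊤) : Algebra.FiniteType K S := by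
  refine ⟨h ▸ Subalgebra.FG.sup ?_ ?_⟩
  · exact Algebra.map_top f₁ ▸ Algebra.FiniteType.out.map f₁
  · exact Algebra.map_top f₂ ▸ Algebra.FiniteType.out.map f₂

end Compositum

section PicardVessiot

open Function (Semiconj)

/-- `R`, with its endomorphism `σ`, is a Picard–Vessiot ring over `(K, φ)` for the equation
`σ(y) = A y`. The fundamental matrix `Y` and the inverse `w` of its determinant are part of the
data. -/
structure IsPicardVessiotRing {K R ι : Type*} [CommRing K] [CommRing R] [Algebra K R] [Fintype ι]
    [DecidableEq ι] (φ : K →+* K) (A : Matrix ι ι K) (σ : R →+* R) (Y : Matrix ι ι R) (w : R) :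
    Prop where
  semiconj : Semiconj (algebraMap K R) φ σ
  diffSimple : DiffSimple σ
  det_mul_eq_one : Y.det * w = 1
  map_eq : Y.map σ = A.map (algebraMap K R) * Y
  adjoin_eq_top : Algebra.adjoin K (insert w {x : R | ∃ i j, Y i j = x}) = ⊤

theorem PseudoField.nontrivial_tensorProduct {K A B : Type*} [CommRing K] [CommRing A]
    [CommRing B] [Algebra K A] [Algebra K B] [Nontrivial A] [Nontrivial B] {φ : K →+* K}
    {σ : B →+* B} (hφ : PseudoField K φ) (hσ : Semiconj (algebraMap K B) φ σ) :
    Nontrivial (A ⊗[K] B) := by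
  have := hφ.isSemisimpleRing
  have := Module.projective_of_isSemisimpleRing K A
  exact (Algebra.TensorProduct.includeLeft_injective (S := K) (hφ.1.injective hσ)).nontrivial

namespace IsPicardVessiotRing

universe v w

variable {K : Type*} {R₁ : Type v} {R₂ : Type w} {ι : Type*} [CommRing K] [CommRing R₁]
  [CommRing R₂] [Algebra K R₁] [Algebra K R₂] [Fintype ι] [DecidableEq ι] {φ : K →+* K}
  {A : Matrix ι ι K} {φ₁ : R₁ →+* R₁} {φ₂ : R₂ →+* R₂} {Y₁ : Matrix ι ι R₁} {Y₂ : Matrix ι ι R₂}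
  {w₁ : R₁} {w₂ : R₂}

theorem isFundamentalMatrix (h : IsPicardVessiotRing φ A φ₁ Y₁ w₁) :
    IsFundamentalMatrix φ₁ (A.map (algebraMap K R₁)) Y₁ :=
  ⟨.of_mul_eq_one _ h.det_mul_eq_one, h.map_eq⟩

theorem finiteType (h : IsPicardVessiotRing φ A φ₁ Y₁ w₁) : Algebra.FiniteType K R₁ := by
  have hfin : {x : R₁ | ∃ i j, Y₁ i j = x}.Finite :=
    (Set.finite_range fun p : ι × ι => Y₁ p.1 p.2).subset fun x ⟨i, j, hx⟩ => ⟨(i, j), hx⟩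
  exact ⟨⟨(hfin.insert w₁).toFinset, by rw [Set.Finite.coe_toFinset, h.adjoin_eq_top]⟩⟩

theorem adjoin_constSubring_eq_top {S : Type*} [CommRing S] [Algebra K S] [Algebra R₁ S]
    [Algebra R₂ S] [IsScalarTower K R₁ S] [IsScalarTower K R₂ S] {σ : S →+* S}
    (P₁ : IsPicardVessiotRing φ A φ₁ Y₁ w₁) (P₂ : IsPicardVessiotRing φ A φ₂ Y₂ w₂)
    (hσ₁ : Semiconj (algebraMap R₁ S) φ₁ σ) (hσ₂ : Semiconj (algebraMap R₂ S) φ₂ σ)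
    (hgen : (IsScalarTower.toAlgHom K R₁ S).range ⊔ (IsScalarTower.toAlgHom K R₂ S).range = ⊤) :
    Algebra.adjoin R₁ (constSubring σ : Set S) = ⊤ := by
  set T := Algebra.adjoin R₁ (constSubring σ : Set S)
  have hconst : constSubring σ ≤ T.toSubring := Algebra.subset_adjoin
  have hY₁ := P₁.isFundamentalMatrix.map hσ₁
  have hY₂ := P₂.isFundamentalMatrix.map hσ₂
  rw [Matrix.map_map, ← RingHom.coe_comp, ← IsScalarTower.algebraMap_eq] at hY₁ hY₂
  have hw₂ : algebraMap R₂ S w₂ ∈ T := by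
    refine hY₁.inv_det_mem hY₂ hconst (w := algebraMap R₁ S w₁) ?_ (T.algebraMap_mem w₁) ?_
    · rw [← RingHom.mapMatrix_apply, ← RingHom.map_det, ← map_mul, P₁.det_mul_eq_one, map_one]
    · rw [← RingHom.mapMatrix_apply, ← RingHom.map_det, ← map_mul, P₂.det_mul_eq_one, map_one]
  have hR₁ : (IsScalarTower.toAlgHom K R₁ S).range ≤ T.restrictScalars K := by
    rintro _ ⟨r, rfl⟩
    exact T.algebraMap_mem r
  have hR₂ : (IsScalarTower.toAlgHom K R₂ S).range ≤ T.restrictScalars K := by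
    rw [← Algebra.map_top, ← P₂.adjoin_eq_top, AlgHom.map_adjoin, Algebra.adjoin_le_iff]
    rintro _ ⟨x, rfl | ⟨i, j, rfl⟩, rfl⟩
    · exact hw₂
    · exact hY₁.apply_mem hY₂ hconst (fun i j => T.algebraMap_mem (Y₁ i j)) i j
  have htop : T.restrictScalars K = ⊤ := top_le_iff.1 (hgen ▸ sup_le hR₁ hR₂)
  exact Subalgebra.restrictScalars_injective K (htop.trans (Subalgebra.restrictScalars_top K).symm)

theorem exists_compositum (hφ : PseudoField K φ) (P₁ : IsPicardVessiotRing φ A φ₁ Y₁ w₁)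
    (P₂ : IsPicardVessiotRing φ A φ₂ Y₂ w₂) :
    ∃ (S : Type (max v w)) (_ : CommRing S) (_ : Algebra K S) (_ : Algebra R₁ S)
      (_ : Algebra R₂ S) (_ : IsScalarTower K R₁ S) (_ : IsScalarTower K R₂ S) (σ : S →+* S),
      Algebra.FiniteType K S ∧ DiffSimple σ ∧ Semiconj (algebraMap K S) φ σ ∧
      Semiconj (algebraMap R₁ S) φ₁ σ ∧ Semiconj (algebraMap R₂ S) φ₂ σ ∧
      Algebra.adjoin R₁ (constSubring σ : Set S) = ⊤ ∧
      Algebra.adjoin R₂ (constSubring σ : Set S) = ⊤ := by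
  have := P₁.diffSimple.nontrivial
  have := P₂.diffSimple.nontrivial
  have := P₁.finiteType
  have := P₂.finiteType
  have : Nontrivial (R₁ ⊗[K] R₂) := hφ.nontrivial_tensorProduct P₂.semiconj
  obtain ⟨S, _, _, _, _, _, _, σ, hS, hσ₁, hσ₂, hgen⟩ :=
    exists_diffSimple_compositum P₁.semiconj P₂.semiconj
  refine ⟨S, _, _, _, _, ‹_›, ‹_›, σ, finiteType_of_range_sup_range_eq_top hgen, hS, ?_, hσ₁, hσ₂,
    P₁.adjoin_constSubring_eq_top P₂ hσ₁ hσ₂ hgen,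
    P₂.adjoin_constSubring_eq_top P₁ hσ₂ hσ₁ ((sup_comm _ _).trans hgen)⟩
  rw [IsScalarTower.algebraMap_eq K R₁ S]
  exact P₁.semiconj.trans hσ₁

end IsPicardVessiotRing

end PicardVessiot

/-- Uniqueness of Picard–Vessiot rings: two PV rings `R₁`, `R₂` for the same equation
`φ(y) = Ay` over a `φ`-pseudo field `K` become isomorphic after a base change to a
suitable finite field extension `k̃` of `k = K^φ` containing `k₁ = R₁^φ` and `k₂ = R₂^φ`. -/
theorem pv_ring_unique_up_to_finite_constant_extension
    {K R₁ R₂ : Type u} [CommRing K] [CommRing R₁] [CommRing R₂]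
    [Algebra K R₁] [Algebra K R₂] {n : ℕ}
    (φ : K →+* K) (hPF : PseudoField K φ)
    (A : Matrix (Fin n) (Fin n) K) (hA : IsUnit A.det)
    (φ₁ : R₁ →+* R₁) (φ₂ : R₂ →+* R₂)
    (h₁ : ∀ a : K, φ₁ (algebraMap K R₁ a) = algebraMap K R₁ (φ a))
    (h₂ : ∀ a : K, φ₂ (algebraMap K R₂ a) = algebraMap K R₂ (φ a))
    (hs₁ : DiffSimple φ₁) (hs₂ : DiffSimple φ₂)
    (Y₁ : Matrix (Fin n) (Fin n) R₁) (Y₂ : Matrix (Fin n) (Fin n) R₂)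
    (w₁ : R₁) (w₂ : R₂)
    (hw₁ : Y₁.det * w₁ = 1) (hw₂ : Y₂.det * w₂ = 1)
    (hY₁ : Y₁.map ⇑φ₁ = A.map ⇑(algebraMap K R₁) * Y₁)
    (hY₂ : Y₂.map ⇑φ₂ = A.map ⇑(algebraMap K R₂) * Y₂)
    (hg₁ : Algebra.adjoin K (insert w₁ {x : R₁ | ∃ i j, Y₁ i j = x}) = ⊤)
    (hg₂ : Algebra.adjoin K (insert w₂ {x : R₂ | ∃ i j, Y₂ i j = x}) = ⊤) :
    ∃ (k' : Type u) (_ : Field k')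
      (e : ↥(constSubring φ) →+* k')
      (e₁ : ↥(constSubring φ₁) →+* k') (e₂ : ↥(constSubring φ₂) →+* k'),
      -- `k'` is a finite extension of `k = K^φ`
      Function.Injective e ∧
      (@Module.Finite ↥(constSubring φ) k' _ _ (Module.compHom k' e)) ∧
      -- `e₁`, `e₂` are `k`-algebra embeddings of `k₁`, `k₂` into `k'`
      Function.Injective e₁ ∧ Function.Injective e₂ ∧
      (∀ (a : K) (ha : φ a = a),
        e₁ ⟨algebraMap K R₁ a, (h₁ a).trans (congrArg (algebraMap K R₁) ha)⟩ = e ⟨a, ha⟩) ∧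
      (∀ (a : K) (ha : φ a = a),
        e₂ ⟨algebraMap K R₂ a, (h₂ a).trans (congrArg (algebraMap K R₂) ha)⟩ = e ⟨a, ha⟩) ∧
      -- the base-changed PV rings are isomorphic compatibly with everything
      (letI : Algebra ↥(constSubring φ₁) k' := e₁.toAlgebra
       letI : Algebra ↥(constSubring φ₂) k' := e₂.toAlgebra
       ∃ (ψ : (R₁ ⊗[↥(constSubring φ₁)] k') ≃+* (R₂ ⊗[↥(constSubring φ₂)] k'))
         (Φ₁' : (R₁ ⊗[↥(constSubring φ₁)] k') →+* (R₁ ⊗[↥(constSubring φ₁)] k'))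
         (Φ₂' : (R₂ ⊗[↥(constSubring φ₂)] k') →+* (R₂ ⊗[↥(constSubring φ₂)] k')),
         -- `Φᵢ' = φᵢ ⊗ id`
         (∀ (r : R₁) (c : k'), Φ₁' (r ⊗ₜ c) = φ₁ r ⊗ₜ c) ∧
         (∀ (r : R₂) (c : k'), Φ₂' (r ⊗ₜ c) = φ₂ r ⊗ₜ c) ∧
         -- `ψ` commutes with the endomorphisms
         (∀ t, ψ (Φ₁' t) = Φ₂' (ψ t)) ∧
         -- `ψ` is compatible with the `K ⊗_k k'`-algebra structures
         (∀ (x : K) (c : k'), ψ (algebraMap K R₁ x ⊗ₜ c) = algebraMap K R₂ x ⊗ₜ c)) := by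
  have P₁ : IsPicardVessiotRing φ A φ₁ Y₁ w₁ := ⟨fun a => (h₁ a).symm, hs₁, hw₁, hY₁, hg₁⟩
  have P₂ : IsPicardVessiotRing φ A φ₂ Y₂ w₂ := ⟨fun a => (h₂ a).symm, hs₂, hw₂, hY₂, hg₂⟩
  obtain ⟨S, _, _, _, _, _, _, σ, _, hS, hσ, hσ₁, hσ₂, htop₁, htop₂⟩ := P₁.exists_compositum hPF P₂
  have := hPF.isArtinianRing
  have := hS.nontrivial
  let e := constMap (algebraMap K S) hσ
  let e₁ := constMap (algebraMap R₁ S) hσ₁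
  let e₂ := constMap (algebraMap R₂ S) hσ₂
  let := e.toAlgebra
  let := e₁.toAlgebra
  let := e₂.toAlgebra
  have : IsScalarTower (constSubring φ) (constSubring σ) S := .of_algebraMap_eq fun _ => rfl
  have : IsScalarTower (constSubring φ₁) (constSubring σ) S := .of_algebraMap_eq fun _ => rfl
  have : IsScalarTower (constSubring φ₂) (constSubring σ) S := .of_algebraMap_eq fun _ => rfl
  obtain ⟨ψ, hψσ, hψK⟩ := exists_ringEquiv_baseChange K hs₁ hs₂ hσ₁ hσ₂ htop₁ htop₂
  exact ⟨constSubring σ, hS.constField, e, e₁, e₂, constMap_injective hPF.1 hσ,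
    hPF.1.finite_constSubring hS hσ, constMap_injective hs₁ hσ₁, constMap_injective hs₂ hσ₂,
    fun a _ => Subtype.ext (IsScalarTower.algebraMap_apply K R₁ S a).symm,
    fun a _ => Subtype.ext (IsScalarTower.algebraMap_apply K R₂ S a).symm,
    ψ, baseChangeHom φ₁ _, baseChangeHom φ₂ _, baseChangeHom_tmul _, baseChangeHom_tmul _,
    hψσ, hψK⟩
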